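/- Let P be a finite poset. Then sc(P) + mc(P) ≤ Σ_{ℓ≥0} 2^{ℓ+1} mc_ℓ(P), where sc(P) is the number of saturated chains of P ending at a maximal element, mc(P) is the number of maximal chains, and mc_ℓ(P) is the number of maximal chains of length ℓ. Consequently the enriched order polytope has at most as many facets as the enriched chain polytope. -/

import Mathlib

/-- The set of minimal elements of a subset of a poset. -/
def minSet {P : Type*} [PartialOrder P] (S : Set P) : Set P :=
  {a | a ∈ S ∧ ∀ b ∈ S, b ≤ a → b = a}

/-- The vertex set of the enriched order polytope. -/
def enrichedOrderVerts (P : Type*) [PartialOrder P] : Set (P → ℝ) :=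
  {x | ∃ F : Set P, IsUpperSet F ∧
    (∀ i ∈ minSet F, x i = 1 ∨ x i = -1) ∧
    (∀ i ∈ F, i ∉ minSet F → x i = 1) ∧
    (∀ i, i ∉ F → x i = 0)}

/-- The vertex set of the enriched chain polytope. -/
def enrichedChainVerts (P : Type*) [PartialOrder P] : Set (P → ℝ) :=
  {x | ∃ A : Set P, IsAntichain (· ≤ ·) A ∧
    (∀ i ∈ A, x i = 1 ∨ x i = -1) ∧ (∀ i, i ∉ A → x i = 0)}

/-- `F` is a facet of `S ⊆ ℝ^P`: a nonempty proper exposed face of affine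
dimension `(card P) - 1`. -/
def IsFacetOf (P : Type*) [Fintype P] (S F : Set (P → ℝ)) : Prop :=
  F.Nonempty ∧ IsExposed ℝ S F ∧ F ≠ S ∧
    Module.finrank ℝ ↥(vectorSpan ℝ F) = Fintype.card P - 1

/-- A saturated chain `i_1 ⋖ ⋯ ⋖ i_r` whose top `i_r` is a maximal element. -/
def IsSatChainToMax {P : Type*} [PartialOrder P] (l : List P) : Prop :=
  l ≠ [] ∧ l.Chain' (· ⋖ ·) ∧ (∃ a, l.getLast? = some a ∧ IsMax a)

/-- A maximal chain: a saturated chain from a minimal to a maximal element. -/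
def IsMaxChainList {P : Type*} [PartialOrder P] (l : List P) : Prop :=
  l ≠ [] ∧ l.Chain' (· ⋖ ·) ∧
    (∃ a, l.head? = some a ∧ IsMin a) ∧ (∃ a, l.getLast? = some a ∧ IsMax a)

/-!
The enriched order polytope is cut out by one inequality `x a ≤ β x` for each saturated chain
`a ⋖ b₁ ⋖ ⋯ ⋖ bᵣ` ending at a maximal element and one inequality `-x a ≤ β x` for each maximal
chain, where `β x = x b₁ / 2 + ⋯ + x bᵣ / 2 ^ r + 1 / 2 ^ r`. To see that they suffice, let `u a` be
the least of the bounds `β x` over the chains starting at `a` and put `y = (x + u) / 2`. The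
inequalities say that `0 ≤ y ≤ u ≤ 1` and `u a ≤ y b` for `a < b`, so for each `t ∈ (0, 1]` the
filter `{u ≥ t}`, signed by whether `y ≥ t`, is a vertex; averaging these vertices over `t` gives
`2 y - u = x`. Each facet spans the hyperplane of an inequality that is tight on it, so there are at
most `sc(P) + mc(P)` facets.

On the other side, every choice of signs on a maximal chain of length `ℓ` gives a facet of the
enriched chain polytope, and these facets are distinct. A maximal chain of length `ℓ` has `ℓ + 1`
upper segments and every saturated chain ending at a maximal element is one of these, so the
comparison reduces to `ℓ + 2 ≤ 2 ^ (ℓ + 1)`.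
-/

section Polyhedra

lemma vectorSpan_le_ker_linear_of_forall_eq {k V W A B : Type*} [Ring k] [AddCommGroup V]
    [Module k V] [AddTorsor V A] [AddCommGroup W] [Module k W] [AddTorsor W B] {F : Set A}
    {g : A →ᵃ[k] B} {c : B} (hg : ∀ x ∈ F, g x = c) : vectorSpan k F ≤ LinearMap.ker g.linear := by
  rw [LinearMap.le_ker_iff_map, AffineMap.map_vectorSpan, vectorSpan_eq_bot_iff_subsingleton]
  rintro _ ⟨x, hx, rfl⟩ _ ⟨y, hy, rfl⟩
  rw [hg x hx, hg y hy]

lemma affineMap_le_of_mem_convexHull {E : Type*} [AddCommGroup E] [Module ℝ E] {V : Set E}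
    {g : E →ᵃ[ℝ] ℝ} {c : ℝ} (hV : ∀ v ∈ V, g v ≤ c) {x : E} (hx : x ∈ convexHull ℝ V) :
    g x ≤ c :=
  convexHull_min hV ((convex_Iic c).affine_preimage g) hx

lemma exists_forall_neg_of_convexOn {E ι : Type*} [AddCommGroup E] [Module ℝ E] [Finite ι]
    {F : Set E} (hne : F.Nonempty) {g : ι → E → ℝ} (hg : ∀ i, ConvexOn ℝ F (g i))
    (hle : ∀ i, ∀ x ∈ F, g i x ≤ 0) (hlt : ∀ i, ∃ x ∈ F, g i x < 0) :
    ∃ x ∈ F, ∀ i, g i x < 0 := by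
  classical
  cases nonempty_fintype ι
  suffices h : ∀ s : Finset ι, ∃ x ∈ F, ∀ i ∈ s, g i x < 0 by
    simpa using h Finset.univ
  intro s
  induction s using Finset.induction_on with
  | empty => exact hne.imp fun x hx => ⟨hx, by simp⟩
  | insert i s _ ih =>
    obtain ⟨p, hp, hps⟩ := ih
    obtain ⟨q, hq, hqi⟩ := hlt i
    have hhalf : (0 : ℝ) ≤ 1 / 2 := by norm_num
    have hmid (j : ι) : g j ((1 / 2 : ℝ) • p + (1 / 2 : ℝ) • q) ≤ (g j p + g j q) / 2 := by
      have := (hg j).2 hp hq hhalf hhalf (by norm_num)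
      simp only [smul_eq_mul] at this
      linarith
    refine ⟨_, (hg i).1 hp hq hhalf hhalf (by norm_num), fun j hj => (hmid j).trans_lt ?_⟩
    rcases Finset.mem_insert.1 hj with rfl | hj
    · linarith [hle j p hp]
    · linarith [hle j q hq, hps j hj]

lemma eq_of_isExposed_of_mem_interior {E : Type*} [NormedAddCommGroup E] [NormedSpace ℝ E]
    {S F : Set E} (hF : IsExposed ℝ S F) {p : E} (hp : p ∈ F) (hpS : p ∈ interior S) :
    F = S := by
  obtain ⟨f, rfl⟩ := hF ⟨p, hp⟩
  have hmax : IsLocalMax f p :=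
    Filter.eventually_of_mem (mem_interior_iff_mem_nhds.1 hpS) hp.2
  have hf : f = 0 := hmax.hasFDerivAt_eq_zero f.hasFDerivAt
  simp [hf]

lemma exists_forall_eq_zero_of_isExposed {E ι : Type*} [NormedAddCommGroup E] [NormedSpace ℝ E]
    [FiniteDimensional ℝ E] [Finite ι] {S F : Set E} {g : ι → E →ᵃ[ℝ] ℝ}
    (hS : ∀ x, x ∈ S ↔ ∀ i, g i x ≤ 0) (hF : IsExposed ℝ S F) (hne : F.Nonempty) (hFS : F ≠ S) :
    ∃ i, ∀ x ∈ F, g i x = 0 := by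
  by_contra! hact
  have hFsub : F ⊆ S := hF.subset
  have hSeq : S = ⋂ i, g i ⁻¹' Set.Iic 0 := by ext; simp [hS]
  have hSconv : Convex ℝ S := by
    rw [hSeq]
    exact convex_iInter fun i => (convex_Iic 0).affine_preimage (g i)
  have hconv (i : ι) : ConvexOn ℝ F (g i) :=
    ((convexOn_id convex_univ).comp_affineMap (g i)).subset (Set.subset_univ F)
      (hF.convex hSconv)
  have hle (i : ι) (x : E) (hx : x ∈ F) : g i x ≤ 0 := (hS x).1 (hFsub hx) i
  obtain ⟨p, hp, hneg⟩ := exists_forall_neg_of_convexOn hne hconv hle fun i =>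
    (hact i).imp fun x hx => ⟨hx.1, (hle i x hx.1).lt_of_ne hx.2⟩
  have hopen : IsOpen (⋂ i, g i ⁻¹' Set.Iio 0) :=
    isOpen_iInter_of_finite fun i =>
      isOpen_Iio.preimage (g i).continuous_of_finiteDimensional
  refine hFS (eq_of_isExposed_of_mem_interior hF hp (mem_interior.2 ⟨_, ?_, hopen, ?_⟩))
  · rw [hSeq]
    exact Set.iInter_mono fun i => Set.preimage_mono Set.Iio_subset_Iic_self
  · simpa using hneg

end Polyhedra

section Facets

variable {P : Type*} [Fintype P]

lemma finrank_ker_eq_card_sub_one {f : (P → ℝ) →ₗ[ℝ] ℝ} (hf : f ≠ 0) :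
    Module.finrank ℝ (LinearMap.ker f) = Fintype.card P - 1 := by
  have := Module.Dual.finrank_ker_add_one_of_ne_zero hf
  rw [Module.finrank_fintype_fun_eq_card] at this
  lia

lemma IsFacetOf.eq_setOf_eq_zero {S F : Set (P → ℝ)} (hF : IsFacetOf P S F)
    {g : (P → ℝ) →ᵃ[ℝ] ℝ} (hg : g.linear ≠ 0) (hzero : ∀ x ∈ F, g x = 0) :
    F = {x ∈ S | g x = 0} := by
  obtain ⟨⟨p, hp⟩, hexp, -, hdim⟩ := hF
  obtain ⟨f, rfl⟩ := hexp ⟨p, hp⟩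
  set F := {x ∈ S | ∀ y ∈ S, f y ≤ f x}
  have hspan : vectorSpan ℝ F = LinearMap.ker g.linear :=
    Submodule.eq_of_le_of_finrank_eq (vectorSpan_le_ker_linear_of_forall_eq hzero)
      (hdim.trans (finrank_ker_eq_card_sub_one hg).symm)
  have hfF : ∀ x ∈ F, f.toLinearMap.toAffineMap x = f p := fun x hx =>
    le_antisymm (hp.2 x hx.1) (hx.2 p hp.1)
  refine Set.Subset.antisymm (fun x hx => ⟨hx.1, hzero x hx⟩) fun x ⟨hxS, hx⟩ => ?_
  have hxp : x - p ∈ LinearMap.ker g.linear := by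
    rw [LinearMap.mem_ker, ← vsub_eq_sub, g.linearMap_vsub, hx, hzero p hp, vsub_self]
  have hfx : f x = f p := by
    have := vectorSpan_le_ker_linear_of_forall_eq hfF (hspan ▸ hxp)
    simpa [sub_eq_zero] using this
  exact ⟨hxS, fun y hy => hfx ▸ hp.2 y hy⟩

lemma isFacetOf_setOf_eq {S : Set (P → ℝ)} {f : (P → ℝ) →ₗ[ℝ] ℝ} {c : ℝ}
    (hle : ∀ x ∈ S, f x ≤ c) {p q : P → ℝ} (hp : p ∈ S) (hpc : f p = c) (hq : q ∈ S)
    (hqc : f q ≠ c) (hker : LinearMap.ker f ≤ vectorSpan ℝ {x ∈ S | f x = c}) :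
    IsFacetOf P S {x ∈ S | f x = c} := by
  have hf : f ≠ 0 := by
    rintro rfl
    exact hqc (by simpa using hpc)
  refine ⟨⟨p, hp, hpc⟩, fun _ => ⟨LinearMap.toContinuousLinearMap f, ?_⟩, ?_, ?_⟩
  · ext x
    refine ⟨fun ⟨hx, hxc⟩ => ⟨hx, fun y hy => ?_⟩, fun ⟨hx, hmax⟩ => ⟨hx, ?_⟩⟩
    · simpa [hxc] using hle y hy
    · exact (hle x hx).antisymm (by simpa [hpc] using hmax p hp)
  · intro h
    exact hqc (h.symm ▸ hq : q ∈ {x ∈ S | f x = c}).2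
  · have hspan : vectorSpan ℝ {x ∈ S | f x = c} ≤ LinearMap.ker f :=
      vectorSpan_le_ker_linear_of_forall_eq (g := f.toAffineMap) fun x hx => hx.2
    rw [hspan.antisymm hker, finrank_ker_eq_card_sub_one hf]

lemma ncard_setOf_isFacetOf_le {ι : Type*} [Finite ι] {S : Set (P → ℝ)}
    {g : ι → (P → ℝ) →ᵃ[ℝ] ℝ} (hg : ∀ i, (g i).linear ≠ 0) (hS : ∀ x, x ∈ S ↔ ∀ i, g i x ≤ 0) :
    {F | IsFacetOf P S F}.ncard ≤ Nat.card ι := by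
  have hsub : {F | IsFacetOf P S F} ⊆ Set.range fun i => {x ∈ S | g i x = 0} := by
    intro F hF
    obtain ⟨i, hi⟩ := exists_forall_eq_zero_of_isExposed hS hF.2.1 hF.1 hF.2.2.1
    exact ⟨i, (hF.eq_setOf_eq_zero (hg i) hi).symm⟩
  rw [← Set.ncard_univ]
  refine (Set.ncard_le_ncard hsub (Set.finite_range _)).trans ?_
  rw [← Set.image_univ]
  exact Set.ncard_image_le

lemma finite_setOf_isFacetOf_convexHull {V : Set (P → ℝ)} (hV : V.Finite) :
    {F | IsFacetOf P (convexHull ℝ V) F}.Finite := by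
  have hcompact : IsCompact (convexHull ℝ V) := hV.isCompact_convexHull ℝ
  refine Set.Finite.of_finite_image (f := Set.extremePoints ℝ) (hV.finite_subsets.subset ?_)
    (Set.LeftInvOn.injOn (f₁' := fun W => closure (convexHull ℝ W)) ?_)
  · rintro _ ⟨F, hF, rfl⟩
    exact hF.2.1.isExtreme.extremePoints_subset_extremePoints.trans
      extremePoints_convexHull_subset
  · exact fun F hF => closure_convexHull_extremePoints (hF.2.1.isCompact hcompact)
      (hF.2.1.convex (convex_convexHull ℝ V))

lemma ker_le_of_forall_single_sub_mem {R ι : Type*} [CommRing R] [Finite ι] [DecidableEq ι]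
    {f : (ι → R) →ₗ[R] R} {W : Submodule R (ι → R)} {p : ι → R}
    (h : ∀ i, Pi.single i 1 - f (Pi.single i 1) • p ∈ W) : LinearMap.ker f ≤ W := by
  cases nonempty_fintype ι
  intro v hv
  have hsum : v - f v • p = ∑ i, v i • (Pi.single i 1 - f (Pi.single i 1) • p) := by
    conv_lhs => rw [pi_eq_sum_univ' v]
    simp only [map_sum, map_smul, Finset.sum_smul, ← Finset.sum_sub_distrib, smul_sub, smul_assoc]
  rw [LinearMap.mem_ker] at hv
  rw [hv, zero_smul, sub_zero] at hsum
  rw [hsum]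
  exact W.sum_mem fun i _ => W.smul_mem _ (h i)

end Facets

section Chains

variable {P : Type*} [PartialOrder P]

lemma isSatChainToMax_iff {l : List P} : IsSatChainToMax l ↔
    l ≠ [] ∧ l.IsChain (· ⋖ ·) ∧ ∃ a, l.getLast? = some a ∧ IsMax a :=
  Iff.rfl

lemma isSatChainToMax_singleton {a : P} : IsSatChainToMax [a] ↔ IsMax a := by
  simp [isSatChainToMax_iff]

lemma isSatChainToMax_cons_cons {a b : P} {l : List P} :
    IsSatChainToMax (a :: b :: l) ↔ a ⋖ b ∧ IsSatChainToMax (b :: l) := by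
  simp [isSatChainToMax_iff, and_assoc]

lemma isMaxChainList_cons {a : P} {l : List P} :
    IsMaxChainList (a :: l) ↔ IsSatChainToMax (a :: l) ∧ IsMin a := by
  simp [IsSatChainToMax, IsMaxChainList, and_assoc, and_comm (a := IsMin a)]

lemma IsMaxChainList.isSatChainToMax {l : List P} (hl : IsMaxChainList l) :
    IsSatChainToMax l :=
  ⟨hl.1, hl.2.1, hl.2.2.2⟩

lemma IsSatChainToMax.pairwise_lt {l : List P} (hl : IsSatChainToMax l) :
    l.Pairwise (· < ·) :=
  (List.IsChain.imp (fun _ _ h => CovBy.lt h) hl.2.1).pairwise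

lemma IsSatChainToMax.nodup {l : List P} (hl : IsSatChainToMax l) : l.Nodup :=
  hl.pairwise_lt.imp ne_of_lt

lemma finite_setOf_isSatChainToMax [Finite P] : {l : List P | IsSatChainToMax l}.Finite := by
  cases nonempty_fintype P
  exact (List.finite_length_le P (Fintype.card P)).subset fun l hl => hl.nodup.length_le_card

lemma finite_isSatChainToMax_cons [Finite P] (a : P) :
    Finite {l : List P // IsSatChainToMax (a :: l)} :=
  (finite_setOf_isSatChainToMax.preimage List.cons_injective.injOn).to_subtype

lemma exists_isSatChainToMax_cons [WellFoundedLT P] [WellFoundedGT P] (a : P) :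
    ∃ l, IsSatChainToMax (a :: l) := by
  induction a using WellFoundedGT.induction with
  | ind a ih =>
    by_cases ha : IsMax a
    · exact ⟨[], isSatChainToMax_singleton.2 ha⟩
    · obtain ⟨b, hab⟩ := exists_covBy_of_wellFoundedLT ha
      obtain ⟨l, hl⟩ := ih b hab.lt
      exact ⟨b :: l, isSatChainToMax_cons_cons.2 ⟨hab, hl⟩⟩

lemma IsSatChainToMax.exists_isMaxChainList_append [WellFoundedLT P] [WellFoundedGT P]
    {a : P} {l : List P} (hl : IsSatChainToMax (a :: l)) : ∃ m, IsMaxChainList (m ++ a :: l) := by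
  induction a using WellFoundedLT.induction generalizing l with
  | ind a ih =>
    by_cases ha : IsMin a
    · exact ⟨[], isMaxChainList_cons.2 ⟨hl, ha⟩⟩
    · obtain ⟨b, hba⟩ := exists_covBy_of_wellFoundedGT ha
      obtain ⟨m, hm⟩ := ih b hba.lt (isSatChainToMax_cons_cons.2 ⟨hba, hl⟩)
      exact ⟨m ++ [b], by simpa using hm⟩

lemma IsSatChainToMax.exists_mem_incompRel {a j : P} {l : List P} (hl : IsSatChainToMax (a :: l))
    (haj : a < j) (hj : j ∉ l) : ∃ i ∈ l, IncompRel (· ≤ ·) i j := by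
  induction l generalizing a with
  | nil => exact absurd haj (isSatChainToMax_singleton.1 hl).not_lt
  | cons b l ih =>
    obtain ⟨hab, hb⟩ := isSatChainToMax_cons_cons.1 hl
    obtain ⟨hjb, hjl⟩ := List.ne_and_not_mem_of_not_mem_cons hj
    by_cases hbj : b ≤ j
    · obtain ⟨i, hi, hij⟩ := ih hb (hbj.lt_of_ne' hjb) hjl
      exact ⟨i, List.mem_cons_of_mem b hi, hij⟩
    · exact ⟨b, List.mem_cons_self, hbj, fun hjb' => hab.2 haj (hjb'.lt_of_ne hjb)⟩

lemma IsMaxChainList.exists_mem_incompRel {m : List P} (hm : IsMaxChainList m) {j : P}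
    (hj : j ∉ m) : ∃ i ∈ m, IncompRel (· ≤ ·) i j := by
  obtain ⟨a, l, rfl⟩ := List.exists_cons_of_ne_nil hm.1
  obtain ⟨hl, ha⟩ := isMaxChainList_cons.1 hm
  obtain ⟨hja, hjl⟩ := List.ne_and_not_mem_of_not_mem_cons hj
  by_cases haj : a ≤ j
  · obtain ⟨i, hi, hij⟩ := hl.exists_mem_incompRel (haj.lt_of_ne' hja) hjl
    exact ⟨i, List.mem_cons_of_mem a hi, hij⟩
  · exact ⟨a, List.mem_cons_self, haj, fun h => haj (ha h)⟩

lemma IsMaxChainList.isMaxChain {m : List P} (hm : IsMaxChainList m) :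
    IsMaxChain (· ≤ ·) {i | i ∈ m} := by
  refine ⟨?_, fun t ht hmt => hmt.antisymm fun j hj => ?_⟩
  · have hle : m.Pairwise fun a b => a ≤ b ∨ b ≤ a :=
      hm.isSatChainToMax.pairwise_lt.imp fun h => Or.inl h.le
    have : Std.Symm fun a b : P => a ≤ b ∨ b ≤ a := ⟨fun _ _ => Or.symm⟩
    exact fun i hi j hj hij => hle.forall hi hj hij
  · by_contra hjm
    obtain ⟨i, hi, hij⟩ := hm.exists_mem_incompRel hjm
    exact (ht.total (hmt hi) hj).elim hij.1 hij.2

lemma exists_mem_incompRel_of_isMaxChain {s : Set P} (hs : IsMaxChain (· ≤ ·) s) {j : P}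
    (hj : j ∉ s) : ∃ i ∈ s, IncompRel (· ≤ ·) i j := by
  by_contra! h
  have hchain : IsChain (· ≤ ·) (insert j s) := hs.1.insert fun i hi _ =>
    Or.symm (not_incompRel_iff_symmGen.1 (h i hi))
  exact hj (hs.2 hchain (Set.subset_insert j s) ▸ Set.mem_insert j s)

end Chains

section Counting

variable {P : Type*} [PartialOrder P]

lemma finite_setOf_isMaxChainList [Finite P] : {l : List P | IsMaxChainList l}.Finite :=
  finite_setOf_isSatChainToMax.subset fun _ => IsMaxChainList.isSatChainToMax

variable (P) in
/-- The maximal chains of a finite poset, collected in a `Finset` so that one can sum over them. -/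
noncomputable def maxChains [Finite P] : Finset (List P) :=
  (finite_setOf_isMaxChainList (P := P)).toFinset

lemma mem_maxChains [Finite P] {m : List P} : m ∈ maxChains P ↔ IsMaxChainList m := by
  simp [maxChains]

lemma card_isMaxChainList [Finite P] :
    Nat.card {m : List P // IsMaxChainList m} = (maxChains P).card :=
  Nat.subtype_card _ fun _ => mem_maxChains

lemma card_isSatChainToMax_le [Finite P] :
    Nat.card {l : List P // IsSatChainToMax l} ≤ ∑ m ∈ maxChains P, m.length := by
  classical
  have hsub : finite_setOf_isSatChainToMax.toFinset ⊆
      (maxChains P).biUnion fun m => (Finset.range m.length).image m.drop := by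
    intro l hl
    replace hl : IsSatChainToMax l := by simpa using hl
    obtain ⟨a, l, rfl⟩ := List.exists_cons_of_ne_nil hl.1
    obtain ⟨m, hm⟩ := hl.exists_isMaxChainList_append
    simp only [Finset.mem_biUnion, Finset.mem_image, Finset.mem_range]
    exact ⟨_, mem_maxChains.2 hm, m.length, by simp, List.drop_left⟩
  rw [Nat.subtype_card finite_setOf_isSatChainToMax.toFinset (by simp)]
  calc _ ≤ _ := Finset.card_le_card hsub
    _ ≤ ∑ m ∈ maxChains P, ((Finset.range m.length).image m.drop).card := Finset.card_biUnion_le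
    _ ≤ ∑ m ∈ maxChains P, m.length :=
      Finset.sum_le_sum fun m _ => Finset.card_image_le.trans (Finset.card_range _).le

lemma sum_mul_card_isMaxChainList_length [Fintype P] (f : ℕ → ℕ) :
    ∑ ℓ ∈ Finset.range (Fintype.card P),
        f (ℓ + 1) * Nat.card {m : List P // IsMaxChainList m ∧ m.length = ℓ + 1}
      = ∑ m ∈ maxChains P, f m.length := by
  have hpos : ∀ m ∈ maxChains P, 0 < m.length := fun m hm =>
    List.length_pos_iff.2 (mem_maxChains.1 hm).1
  have hmaps : ∀ m ∈ maxChains P, m.length - 1 ∈ Finset.range (Fintype.card P) := by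
    intro m hm
    have := (mem_maxChains.1 hm).isSatChainToMax.nodup.length_le_card
    have := hpos m hm
    rw [Finset.mem_range]
    lia
  rw [← Finset.sum_fiberwise_of_maps_to hmaps]
  refine Finset.sum_congr rfl fun ℓ _ => ?_
  have hfiber : ∀ m, m ∈ {m ∈ maxChains P | m.length - 1 = ℓ} ↔
      IsMaxChainList m ∧ m.length = ℓ + 1 := by
    intro m
    rw [Finset.mem_filter, ← mem_maxChains]
    refine and_congr_right fun hm => ?_
    have := hpos m hm
    lia
  rw [Nat.subtype_card _ hfiber, mul_comm, ← smul_eq_mul, ← Finset.sum_const]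
  exact Finset.sum_congr rfl fun m hm => by rw [((hfiber m).1 hm).2]

lemma card_isSatChainToMax_add_card_isMaxChainList_le [Finite P] :
    Nat.card {l : List P // IsSatChainToMax l} + Nat.card {m : List P // IsMaxChainList m}
      ≤ ∑ m ∈ maxChains P, 2 ^ m.length :=
  calc _ ≤ (∑ m ∈ maxChains P, m.length) + ∑ _m ∈ maxChains P, 1 := by
        rw [card_isMaxChainList, ← Finset.card_eq_sum_ones]
        exact Nat.add_le_add_right card_isSatChainToMax_le _
    _ = ∑ m ∈ maxChains P, (m.length + 1) := Finset.sum_add_distrib.symm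
    _ ≤ ∑ m ∈ maxChains P, 2 ^ m.length :=
      Finset.sum_le_sum fun m _ => Nat.succ_le_of_lt Nat.lt_two_pow_self

end Counting

section EnrichedOrderPolytope

variable {P : Type*}

/-- The affine functional `x ↦ x b₁ / 2 + ⋯ + x bᵣ / 2 ^ r + 1 / 2 ^ r` attached to a list
`[b₁, …, bᵣ]`; it bounds `|x a|` on the enriched order polytope when `a < b₁ < ⋯ < bᵣ`. -/
noncomputable def chainBound : List P → (P → ℝ) →ᵃ[ℝ] ℝ
  | [] => AffineMap.const ℝ _ 1
  | b :: l => (1 / 2 : ℝ) • ((LinearMap.proj b : (P → ℝ) →ₗ[ℝ] ℝ).toAffineMap + chainBound l)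

/-- The affine functional `s * x a - chainBound l x` attached to a chain `a :: l`. With `s = 1` for
saturated chains ending at a maximal element and `s = -1` for maximal chains, the inequalities
`chainForm s (a :: l) x ≤ 0` cut out the enriched order polytope. The empty list, which is not a
chain here, gets the value `0`. -/
noncomputable def chainForm (s : ℝ) : List P → (P → ℝ) →ᵃ[ℝ] ℝ
  | [] => 0
  | a :: l => s • (LinearMap.proj a : (P → ℝ) →ₗ[ℝ] ℝ).toAffineMap - chainBound l

lemma chainBound_nil (x : P → ℝ) : chainBound [] x = 1 := rfl

lemma chainBound_cons (b : P) (l : List P) (x : P → ℝ) :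
    chainBound (b :: l) x = (x b + chainBound l x) / 2 := by
  simp [chainBound]
  ring

lemma chainForm_cons (s : ℝ) (a : P) (l : List P) (x : P → ℝ) :
    chainForm s (a :: l) x = s * x a - chainBound l x := by
  simp [chainForm]

lemma chainBound_congr {l : List P} {x y : P → ℝ} (h : ∀ b ∈ l, x b = y b) :
    chainBound l x = chainBound l y := by
  induction l with
  | nil => simp only [chainBound_nil]
  | cons b l ih =>
    obtain ⟨hb, hl⟩ := List.forall_mem_cons.1 h
    rw [chainBound_cons, chainBound_cons, hb, ih hl]

lemma chainBound_eq_one {l : List P} {x : P → ℝ} (h : ∀ b ∈ l, x b = 1) :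
    chainBound l x = 1 := by
  induction l with
  | nil => rfl
  | cons b l ih =>
    obtain ⟨hb, hl⟩ := List.forall_mem_cons.1 h
    rw [chainBound_cons, hb, ih hl]
    norm_num

lemma chainForm_linear_ne_zero {s : ℝ} (hs : s ≠ 0) {l : List P} (hne : l ≠ [])
    (hl : l.Nodup) : (chainForm s l).linear ≠ 0 := by
  classical
  obtain ⟨a, l, rfl⟩ := List.exists_cons_of_ne_nil hne
  intro h
  obtain ⟨c, hc⟩ := (AffineMap.linear_eq_zero_iff_exists_const _).1 h
  have heq : chainForm s (a :: l) (Pi.single a 1) = chainForm s (a :: l) 0 := by simp [hc]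
  have hbound : chainBound l (Pi.single a 1) = chainBound l 0 :=
    chainBound_congr fun b hb =>
      Pi.single_eq_of_ne (ne_of_mem_of_not_mem hb (List.nodup_cons.1 hl).1) 1
  rw [chainForm_cons, chainForm_cons, hbound, Pi.single_eq_same] at heq
  simp [hs] at heq

variable [PartialOrder P]

lemma enrichedOrderVerts_subset_pi :
    enrichedOrderVerts P ⊆ Set.univ.pi fun _ => ({1, -1, 0} : Set ℝ) := by
  rintro x ⟨F, -, hmin, hone, hzero⟩ i -
  by_cases hi : i ∈ F
  · by_cases him : i ∈ minSet F
    · rcases hmin i him with h | h <;> simp [h]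
    · simp [hone i hi him]
  · simp [hzero i hi]

lemma finite_enrichedOrderVerts [Finite P] : (enrichedOrderVerts P).Finite :=
  (Set.Finite.pi fun _ => Set.toFinite _).subset enrichedOrderVerts_subset_pi

lemma abs_apply_le_one_of_mem_enrichedOrderVerts {x : P → ℝ} (hx : x ∈ enrichedOrderVerts P)
    (i : P) : |x i| ≤ 1 := by
  rcases enrichedOrderVerts_subset_pi hx i trivial with h | h | (h : x i = 0) <;> simp [h]

lemma abs_le_chainBound_of_mem_enrichedOrderVerts {x : P → ℝ} (hx : x ∈ enrichedOrderVerts P)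
    {a : P} {l : List P} (hl : (a :: l).Pairwise (· < ·)) : |x a| ≤ chainBound l x := by
  have habs := abs_apply_le_one_of_mem_enrichedOrderVerts hx
  obtain ⟨F, hF, -, hone, hzero⟩ := hx
  induction l generalizing a with
  | nil => exact habs a
  | cons b l ih =>
    obtain ⟨hab, hbl⟩ := List.pairwise_cons.1 hl
    by_cases ha : a ∈ F
    · have hone_above : ∀ c ∈ b :: l, x c = 1 := fun c hc =>
        hone c (hF (hab c hc).le ha) fun hmin => (hab c hc).ne (hmin.2 a ha (hab c hc).le)
      rw [chainBound_eq_one hone_above]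
      exact habs a
    · rw [hzero a ha, abs_zero, chainBound_cons]
      linarith [ih hbl, neg_abs_le (x b)]

lemma chainForm_nonpos_of_mem_convexHull {s : ℝ} (hs : |s| ≤ 1) {l : List P}
    (hl : l.Pairwise (· < ·)) {x : P → ℝ} (hx : x ∈ convexHull ℝ (enrichedOrderVerts P)) :
    chainForm s l x ≤ 0 := by
  refine affineMap_le_of_mem_convexHull (fun v hv => ?_) hx
  cases l with
  | nil => rfl
  | cons a l =>
    rw [chainForm_cons, sub_nonpos]
    calc s * v a ≤ |s * v a| := le_abs_self _
      _ = |s| * |v a| := abs_mul s (v a)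
      _ ≤ |v a| := mul_le_of_le_one_left (abs_nonneg _) hs
      _ ≤ chainBound l v := abs_le_chainBound_of_mem_enrichedOrderVerts hv hl

-- The filter `{u ≥ t}` carries the sign `+1` where `y ≥ t` and `-1` where `y < t ≤ u`; the latter
-- happens only at its minimal elements because `u i ≤ y j` for `i < j`.
lemma threshold_mem_enrichedOrderVerts {y u : P → ℝ} (hyu : ∀ i, y i ≤ u i)
    (huy : ∀ i j, i < j → u i ≤ y j) (t : ℝ) :
    (fun i => 2 * (Set.Iic (y i)).indicator 1 t - (Set.Iic (u i)).indicator 1 t) ∈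
      enrichedOrderVerts P := by
  refine ⟨{i | t ≤ u i}, fun i j hij hi => ?_, fun i hi => ?_, fun i hi hmin => ?_,
    fun i hi => ?_⟩
  · rcases hij.eq_or_lt with rfl | hij
    · exact hi
    · exact le_trans hi ((huy i j hij).trans (hyu j))
  · have hiu : t ≤ u i := hi.1
    by_cases hiy : t ≤ y i
    · left; norm_num [hiu, hiy]
    · right; norm_num [hiu, hiy]
  · have hiu : t ≤ u i := hi
    obtain ⟨j, hj, hji⟩ : ∃ j, t ≤ u j ∧ j < i := by
      by_contra! h
      exact hmin ⟨hi, fun j hj hji => hji.eq_of_not_lt (h j hj)⟩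
    have hiy : t ≤ y i := hj.trans (huy j i hji)
    norm_num [hiu, hiy]
  · have hiu : ¬ t ≤ u i := hi
    have hiy : ¬ t ≤ y i := fun h => hiu (h.trans (hyu i))
    simp [hiu, hiy]

open MeasureTheory in
lemma setIntegral_Ioc_indicator_Iic {c : ℝ} (hc0 : 0 ≤ c) (hc1 : c ≤ 1) :
    ∫ t in Set.Ioc (0 : ℝ) 1, (Set.Iic c).indicator 1 t = c := by
  rw [integral_indicator_one measurableSet_Iic, measureReal_restrict_apply measurableSet_Iic,
    Set.inter_comm, Set.Ioc_inter_Iic, min_eq_right hc1, Real.volume_real_Ioc_of_le hc0, sub_zero]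

-- `2 y - u` is the average over `t ∈ (0, 1]` of the threshold vertices at height `t`.
open MeasureTheory in
lemma two_mul_sub_mem_convexHull_enrichedOrderVerts [Finite P] {y u : P → ℝ}
    (hy0 : ∀ i, 0 ≤ y i) (hyu : ∀ i, y i ≤ u i) (hu1 : ∀ i, u i ≤ 1)
    (huy : ∀ i j, i < j → u i ≤ y j) :
    (fun i => 2 * y i - u i) ∈ convexHull ℝ (enrichedOrderVerts P) := by
  cases nonempty_fintype P
  let μ : Measure ℝ := volume.restrict (Set.Ioc 0 1)
  have : IsProbabilityMeasure μ := ⟨by simp [μ]⟩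
  have hind (c : ℝ) : Integrable ((Set.Iic c).indicator (1 : ℝ → ℝ)) μ :=
    (integrable_const (1 : ℝ)).indicator measurableSet_Iic
  let vertex (t : ℝ) (i : P) : ℝ :=
    2 * (Set.Iic (y i)).indicator 1 t - (Set.Iic (u i)).indicator 1 t
  have hint (i : P) : Integrable (fun t => vertex t i) μ :=
    ((hind (y i)).const_mul 2).sub (hind (u i))
  have havg : ∫ t, vertex t ∂μ = fun i => 2 * y i - u i := by
    funext i
    rw [eval_integral hint, integral_sub ((hind (y i)).const_mul 2) (hind (u i)),
      integral_const_mul, setIntegral_Ioc_indicator_Iic (hy0 i) ((hyu i).trans (hu1 i)),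
      setIntegral_Ioc_indicator_Iic ((hy0 i).trans (hyu i)) (hu1 i)]
  rw [← havg]
  exact (convex_convexHull ℝ _).integral_mem
    (finite_enrichedOrderVerts.isCompact_convexHull ℝ).isClosed
    (.of_forall fun t => subset_convexHull ℝ _ (threshold_mem_enrichedOrderVerts hyu huy t))
    (.of_eval hint)

/-- The least value of `chainBound l x` over the saturated chains `a :: l` ending at a maximal
element. For `x` in the enriched order polytope this is the height function `u` of the threshold
decomposition of `x`, with `y = (x + u) / 2`. -/
noncomputable def chainCeil (x : P → ℝ) (a : P) : ℝ :=
  ⨅ l : {l : List P // IsSatChainToMax (a :: l)}, chainBound l.1 x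

section ChainCeil

variable [Finite P] {x : P → ℝ} {a b : P}

lemma chainCeil_le {l : List P} (hl : IsSatChainToMax (a :: l)) :
    chainCeil x a ≤ chainBound l x := by
  have := finite_isSatChainToMax_cons a
  exact ciInf_le (Set.finite_range _).bddBelow (⟨l, hl⟩ : {l // IsSatChainToMax (a :: l)})

lemma exists_chainBound_eq_chainCeil (x : P → ℝ) (a : P) :
    ∃ l, IsSatChainToMax (a :: l) ∧ chainBound l x = chainCeil x a := by
  have := finite_isSatChainToMax_cons a
  have : Nonempty {l : List P // IsSatChainToMax (a :: l)} :=
    nonempty_subtype.2 (exists_isSatChainToMax_cons a)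
  obtain ⟨⟨l, hl⟩, h⟩ := exists_eq_ciInf_of_finite
    (f := fun l : {l : List P // IsSatChainToMax (a :: l)} => chainBound l.1 x)
  exact ⟨l, hl, h⟩

lemma chainCeil_le_of_covBy (hab : a ⋖ b) : chainCeil x a ≤ (x b + chainCeil x b) / 2 := by
  obtain ⟨l, hl, hlb⟩ := exists_chainBound_eq_chainCeil x b
  rw [← hlb, ← chainBound_cons]
  exact chainCeil_le (isSatChainToMax_cons_cons.2 ⟨hab, hl⟩)

lemma le_chainCeil (hsat : ∀ l, IsSatChainToMax l → chainForm 1 l x ≤ 0) (a : P) :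
    x a ≤ chainCeil x a := by
  obtain ⟨l, hl, hla⟩ := exists_chainBound_eq_chainCeil x a
  simpa [chainForm_cons, hla] using hsat _ hl

lemma chainCeil_le_of_lt (hsat : ∀ l, IsSatChainToMax l → chainForm 1 l x ≤ 0) (hab : a < b) :
    chainCeil x a ≤ (x b + chainCeil x b) / 2 := by
  induction a using WellFoundedGT.induction with
  | ind a ih =>
    obtain ⟨c, hac, hcb⟩ := exists_covBy_le_of_lt hab
    rcases hcb.eq_or_lt with rfl | hcb
    · exact chainCeil_le_of_covBy hac
    · linarith [ih c hac.lt hcb, chainCeil_le_of_covBy (x := x) hac, le_chainCeil hsat c]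

lemma chainCeil_le_one (hsat : ∀ l, IsSatChainToMax l → chainForm 1 l x ≤ 0) (a : P) :
    chainCeil x a ≤ 1 := by
  induction a using WellFoundedGT.induction with
  | ind a ih =>
    by_cases ha : IsMax a
    · exact chainCeil_le (isSatChainToMax_singleton.2 ha)
    · obtain ⟨b, hab⟩ := exists_covBy_of_wellFoundedLT ha
      linarith [ih b hab.lt, chainCeil_le_of_covBy (x := x) hab, le_chainCeil hsat b]

lemma add_chainCeil_nonneg (hsat : ∀ l, IsSatChainToMax l → chainForm 1 l x ≤ 0)
    (hmax : ∀ m, IsMaxChainList m → chainForm (-1) m x ≤ 0) (a : P) :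
    0 ≤ x a + chainCeil x a := by
  induction a using WellFoundedLT.induction with
  | ind a ih =>
    by_cases ha : IsMin a
    · obtain ⟨l, hl, hla⟩ := exists_chainBound_eq_chainCeil x a
      have := hmax _ (isMaxChainList_cons.2 ⟨hl, ha⟩)
      rw [chainForm_cons, hla] at this
      linarith
    · obtain ⟨b, hba⟩ := not_isMin_iff.1 ha
      linarith [ih b hba, chainCeil_le_of_lt hsat hba, le_chainCeil hsat b]

end ChainCeil

lemma mem_convexHull_enrichedOrderVerts_iff [Finite P] {x : P → ℝ} :
    x ∈ convexHull ℝ (enrichedOrderVerts P) ↔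
      (∀ l, IsSatChainToMax l → chainForm 1 l x ≤ 0) ∧
        ∀ m, IsMaxChainList m → chainForm (-1) m x ≤ 0 := by
  refine ⟨fun hx => ⟨fun l hl => ?_, fun m hm => ?_⟩, fun ⟨hsat, hmax⟩ => ?_⟩
  · exact chainForm_nonpos_of_mem_convexHull (by simp) hl.pairwise_lt hx
  · exact chainForm_nonpos_of_mem_convexHull (by simp) hm.isSatChainToMax.pairwise_lt hx
  · have hdecomp : x = fun i => 2 * ((x i + chainCeil x i) / 2) - chainCeil x i := by
      funext i
      ring
    rw [hdecomp]
    exact two_mul_sub_mem_convexHull_enrichedOrderVerts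
      (fun i => div_nonneg (add_chainCeil_nonneg hsat hmax i) zero_le_two)
      (fun i => by linarith [le_chainCeil hsat i]) (chainCeil_le_one hsat)
      fun _ _ => chainCeil_le_of_lt hsat

lemma ncard_setOf_isFacetOf_enrichedOrderVerts_le [Fintype P] :
    {F | IsFacetOf P (convexHull ℝ (enrichedOrderVerts P)) F}.ncard
      ≤ Nat.card {l : List P // IsSatChainToMax l}
        + Nat.card {m : List P // IsMaxChainList m} := by
  have : Finite {l : List P // IsSatChainToMax l} := finite_setOf_isSatChainToMax.to_subtype
  have : Finite {m : List P // IsMaxChainList m} := finite_setOf_isMaxChainList.to_subtype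
  rw [← Nat.card_sum]
  refine ncard_setOf_isFacetOf_le
    (g := Sum.elim (fun l => chainForm 1 l.1) fun m => chainForm (-1) m.1) ?_ fun x => ?_
  · rintro (⟨l, hl⟩ | ⟨m, hm⟩)
    · exact chainForm_linear_ne_zero one_ne_zero hl.1 hl.nodup
    · exact chainForm_linear_ne_zero (by simp) hm.1 hm.isSatChainToMax.nodup
  · simp [mem_convexHull_enrichedOrderVerts_iff]

end EnrichedOrderPolytope

section EnrichedChainPolytope

lemma signType_coe_eq_one_or_eq_neg_one {s : SignType} (hs : s ≠ 0) :
    (s : ℝ) = 1 ∨ (s : ℝ) = -1 := by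
  cases s <;> simp_all

variable {P : Type*}

/-- The linear functional with coefficients `w i ∈ {-1, 0, 1}`. The inequalities `signForm w x ≤ 1`,
for `w` supported on a chain, hold on the enriched chain polytope. -/
noncomputable def signForm [Fintype P] (w : P → SignType) : (P → ℝ) →ₗ[ℝ] ℝ :=
  Fintype.linearCombination ℝ fun i => (w i : ℝ)

lemma signForm_apply [Fintype P] (w : P → SignType) (x : P → ℝ) :
    signForm w x = ∑ i, x i * w i := by
  simp [signForm, Fintype.linearCombination_apply]

lemma signForm_single [Fintype P] [DecidableEq P] (w : P → SignType) (i : P) (r : ℝ) :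
    signForm w (Pi.single i r) = r * w i :=
  Fintype.linearCombination_apply_single ℝ _ i r

variable [PartialOrder P]

lemma finite_enrichedChainVerts [Finite P] : (enrichedChainVerts P).Finite := by
  refine (Set.Finite.pi fun _ => Set.toFinite ({1, -1, 0} : Set ℝ)).subset ?_
  rintro x ⟨A, -, hsign, hzero⟩ i -
  by_cases hi : i ∈ A
  · rcases hsign i hi with h | h <;> simp [h]
  · simp [hzero i hi]

lemma single_mem_convexHull_enrichedChainVerts [DecidableEq P] (i : P) {s : SignType}
    (hs : s ≠ 0) : Pi.single i (s : ℝ) ∈ convexHull ℝ (enrichedChainVerts P) := by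
  refine subset_convexHull ℝ _ ⟨{i}, by simp, ?_, fun j hj => Pi.single_eq_of_ne hj _⟩
  rintro _ rfl
  simpa using signType_coe_eq_one_or_eq_neg_one hs

lemma single_add_single_mem_convexHull_enrichedChainVerts [DecidableEq P] {i j : P}
    (hij : IncompRel (· ≤ ·) i j) {s t : SignType} (hs : s ≠ 0) (ht : t ≠ 0) :
    Pi.single i (s : ℝ) + Pi.single j (t : ℝ) ∈ convexHull ℝ (enrichedChainVerts P) := by
  have hne : i ≠ j := hij.ne
  refine subset_convexHull ℝ _ ⟨{i, j}, ?_, ?_, fun k hk => ?_⟩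
  · rintro _ (rfl | rfl) _ (rfl | rfl) hab
    exacts [absurd rfl hab, hij.1, hij.2, absurd rfl hab]
  · rintro _ (rfl | rfl)
    · simpa [hne] using signType_coe_eq_one_or_eq_neg_one hs
    · simpa [hne.symm] using signType_coe_eq_one_or_eq_neg_one ht
  · obtain ⟨hki, hkj⟩ := not_or.1 hk
    rw [Pi.add_apply, Pi.single_eq_of_ne hki, Pi.single_eq_of_ne hkj, add_zero]

variable [Fintype P]

/-- The face of the enriched chain polytope on which `signForm w` equals `1`. It is a facet when
the support of `w` is a maximal chain. -/
def signFace (w : P → SignType) : Set (P → ℝ) :=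
  {x ∈ convexHull ℝ (enrichedChainVerts P) | signForm w x = 1}

lemma single_mem_signFace_iff [DecidableEq P] {w : P → SignType} {i : P} {s : SignType}
    (hs : s ≠ 0) : Pi.single i (s : ℝ) ∈ signFace w ↔ w i = s := by
  refine (and_iff_right (single_mem_convexHull_enrichedChainVerts i hs)).trans ?_
  rw [signForm_single]
  cases s <;> cases w i <;> first | exact absurd rfl hs | norm_num <;> decide

lemma signFace_injective : Function.Injective (signFace : (P → SignType) → Set (P → ℝ)) := by
  classical
  intro w w' h
  funext i
  by_contra hne
  rcases eq_or_ne (w i) 0 with hw | hw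
  · have hw' : w' i ≠ 0 := fun hw' => hne (hw.trans hw'.symm)
    exact hne ((single_mem_signFace_iff hw').1 (h ▸ (single_mem_signFace_iff hw').2 rfl))
  · exact hne ((single_mem_signFace_iff hw).1 (h ▸ (single_mem_signFace_iff hw).2 rfl)).symm

lemma signForm_le_one {w : P → SignType} (hw : IsChain (· ≤ ·) (Function.support w))
    {x : P → ℝ} (hx : x ∈ convexHull ℝ (enrichedChainVerts P)) : signForm w x ≤ 1 := by
  refine affineMap_le_of_mem_convexHull (g := (signForm w).toAffineMap) ?_ hx
  rintro v ⟨A, hA, hsign, hzero⟩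
  rw [LinearMap.coe_toAffineMap, signForm_apply]
  have hterm (i : P) (hi : i ∉ Function.support w ∩ A) : v i * w i = 0 := by
    by_cases hiA : i ∈ A
    · have hwi : w i = 0 := by_contra fun h => hi ⟨h, hiA⟩
      simp [hwi]
    · simp [hzero i hiA]
  rcases (inter_subsingleton_of_isChain_of_isAntichain hw hA).eq_empty_or_singleton
    with hempty | ⟨i, hi⟩
  · simp [hempty ▸ hterm]
  · obtain ⟨hwi, hiA⟩ : i ∈ Function.support w ∩ A := hi ▸ rfl
    rw [Fintype.sum_eq_single i fun j hj => hterm j (hi ▸ hj)]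
    rcases hsign i hiA with h | h <;> rcases signType_coe_eq_one_or_eq_neg_one hwi with h' | h' <;>
      norm_num [h, h']

lemma isFacetOf_signFace [Nonempty P] {w : P → SignType}
    (hw : IsMaxChain (· ≤ ·) (Function.support w)) :
    IsFacetOf P (convexHull ℝ (enrichedChainVerts P)) (signFace w) := by
  classical
  obtain ⟨k, hk⟩ := hw.nonempty_iff.1 ‹_›
  have hp : Pi.single k (w k : ℝ) ∈ signFace w := (single_mem_signFace_iff hk).2 rfl
  have hq : Pi.single k ((-w k : SignType) : ℝ) ∈ convexHull ℝ (enrichedChainVerts P) :=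
    single_mem_convexHull_enrichedChainVerts k (by simpa using hk)
  have hqw : signForm w (Pi.single k ((-w k : SignType) : ℝ)) ≠ 1 := by
    rw [signForm_single]
    rcases signType_coe_eq_one_or_eq_neg_one hk with h | h <;> norm_num [h]
  suffices hker : LinearMap.ker (signForm w) ≤ vectorSpan ℝ (signFace w) from
    isFacetOf_setOf_eq (fun _ => signForm_le_one hw.1) hp.1 hp.2 hq hqw hker
  refine ker_le_of_forall_single_sub_mem (p := Pi.single k (w k : ℝ)) fun i => ?_
  rw [signForm_single, one_mul]
  by_cases hi : i ∈ Function.support w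
  · have hdecomp : Pi.single i 1 - (w i : ℝ) • Pi.single k (w k : ℝ) =
        (w i : ℝ) • (Pi.single i (w i : ℝ) - Pi.single k (w k : ℝ) : P → ℝ) := by
      rw [smul_sub, ← Pi.single_smul, smul_eq_mul]
      rcases signType_coe_eq_one_or_eq_neg_one hi with h | h <;> simp [h, Pi.single_neg]
    rw [hdecomp]
    exact Submodule.smul_mem _ _
      (vsub_mem_vectorSpan ℝ ((single_mem_signFace_iff hi).2 rfl) hp)
  · obtain ⟨j, hj, hji⟩ := exists_mem_incompRel_of_isMaxChain hw hi
    have hwi : w i = 0 := Function.notMem_support.1 hi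
    have hpair : Pi.single j (w j : ℝ) + Pi.single i (1 : ℝ) ∈ signFace w := by
      refine ⟨?_, ?_⟩
      · simpa using single_add_single_mem_convexHull_enrichedChainVerts hji hj one_ne_zero
      · rw [map_add, ((single_mem_signFace_iff hj).2 rfl).2, signForm_single, hwi]
        simp
    have := vsub_mem_vectorSpan ℝ hpair ((single_mem_signFace_iff hj).2 rfl)
    simpa [hwi] using this

end EnrichedChainPolytope

section ChainSignings

variable {P : Type*} [Fintype P]

open Classical in
/-- The sign patterns supported exactly on the elements of `m`. For a maximal chain `m` they index
the facets of the enriched chain polytope lying over `m`. -/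
noncomputable def chainSignings (m : List P) : Finset (P → SignType) :=
  Fintype.piFinset fun i => if i ∈ m then {1, -1} else {0}

lemma mem_chainSignings {m : List P} {w : P → SignType} :
    w ∈ chainSignings m ↔ Function.support w = {i | i ∈ m} := by
  classical
  rw [chainSignings, Fintype.mem_piFinset, Set.ext_iff]
  refine forall_congr' fun i => ?_
  change _ ↔ (w i ≠ 0 ↔ i ∈ m)
  split_ifs with hi <;> cases w i <;> simp [hi]

lemma card_chainSignings {m : List P} (hm : m.Nodup) : (chainSignings m).card = 2 ^ m.length := by
  classical
  have hcard (i : P) :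
      (if i ∈ m then {1, -1} else {0} : Finset SignType).card = if i ∈ m then 2 else 1 := by
    split_ifs <;> rfl
  have hfilter : ({i | i ∈ m} : Finset P) = m.toFinset := by
    ext
    simp
  rw [chainSignings, Fintype.card_piFinset, ← List.toFinset_card_of_nodup hm, ← hfilter]
  simp [hcard, Finset.prod_ite]

variable [PartialOrder P]

lemma pairwiseDisjoint_chainSignings :
    (maxChains P : Set (List P)).PairwiseDisjoint chainSignings := by
  intro m hm m' hm' hne
  refine Finset.disjoint_left.2 fun w hw hw' => hne ?_
  have hmem (i : P) : i ∈ m ↔ i ∈ m' :=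
    Set.ext_iff.1 ((mem_chainSignings.1 hw).symm.trans (mem_chainSignings.1 hw')) i
  replace hm := (mem_maxChains.1 hm).isSatChainToMax
  replace hm' := (mem_maxChains.1 hm').isSatChainToMax
  exact List.Perm.eq_of_pairwise (fun _ _ _ _ h h' => absurd h' h.asymm) hm.pairwise_lt
    hm'.pairwise_lt ((List.perm_ext_iff_of_nodup hm.nodup hm'.nodup).2 hmem)

lemma sum_two_pow_length_le_ncard_setOf_isFacetOf_enrichedChainVerts :
    ∑ m ∈ maxChains P, 2 ^ m.length
      ≤ {F | IsFacetOf P (convexHull ℝ (enrichedChainVerts P)) F}.ncard := by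
  classical
  have hcard : ((maxChains P).biUnion chainSignings).card = ∑ m ∈ maxChains P, 2 ^ m.length := by
    rw [Finset.card_biUnion pairwiseDisjoint_chainSignings]
    exact Finset.sum_congr rfl fun m hm =>
      card_chainSignings (mem_maxChains.1 hm).isSatChainToMax.nodup
  rw [← hcard, ← Set.ncard_coe_finset]
  refine Set.ncard_le_ncard_of_injOn signFace (fun w hw => ?_) signFace_injective.injOn
    (finite_setOf_isFacetOf_convexHull finite_enrichedChainVerts)
  obtain ⟨m, hm, hwm⟩ := Finset.mem_biUnion.1 hw
  have hm : IsMaxChainList m := mem_maxChains.1 hm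
  have : Nonempty P := ⟨m.head hm.1⟩
  exact isFacetOf_signFace ((mem_chainSignings.1 hwm).symm ▸ hm.isMaxChain)

end ChainSignings

/-- `sc(P) + mc(P) ≤ Σ_ℓ 2^{ℓ+1} mc_ℓ(P)`; consequently `O^(e)_P` has at most
as many facets as `C^(e)_P`. -/
theorem stmt14 (P : Type*) [Fintype P] [PartialOrder P] :
    (Nat.card {l : List P // IsSatChainToMax l}
        + Nat.card {l : List P // IsMaxChainList l}
      ≤ ∑ ℓ ∈ Finset.range (Fintype.card P),
          2 ^ (ℓ + 1) * Nat.card {l : List P // IsMaxChainList l ∧ l.length = ℓ + 1}) ∧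
    Set.ncard {F : Set (P → ℝ) | IsFacetOf P (convexHull ℝ (enrichedOrderVerts P)) F}
      ≤ Set.ncard {F : Set (P → ℝ) | IsFacetOf P (convexHull ℝ (enrichedChainVerts P)) F} := by
  have hcount := card_isSatChainToMax_add_card_isMaxChainList_le (P := P)
  refine ⟨?_, ?_⟩
  · rwa [sum_mul_card_isMaxChainList_length fun n => 2 ^ n]
  · calc _ ≤ _ := ncard_setOf_isFacetOf_enrichedOrderVerts_le
      _ ≤ ∑ m ∈ maxChains P, 2 ^ m.length := hcount
      _ ≤ _ := sum_two_pow_length_le_ncard_setOf_isFacetOf_enrichedChainVerts
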